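/- Let k = ℚ(t) with the derivation t′ = 1, let Q = (1,t)_k be the quaternion algebra with generators u, v satisfying u² = 1, v² = t, vu = −uv, and let d = d_{(u,v)} + ∂_ϑ with ϑ = −(1/(4t))u − v. Then every differential field extension of (k,′) that splits (Q,d) has transcendence degree at least 3 over k. -/

import Mathlib

open scoped TensorProduct

/-- A derivation on a (possibly noncommutative) ring: an additive map satisfying the
Leibniz rule. -/
structure IsRingDeriv {A : Type*} [Ring A] (d : A → A) : Prop where
  map_add : ∀ x y, d (x + y) = d x + d y
  leibniz : ∀ x y, d (x * y) = d x * y + x * d y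

/-- The derivation `d` on the `k`-algebra `A` restricts to the derivation `δ` on `k`
(along `algebraMap k A`). -/
def RestrictsTo {k A : Type*} [CommRing k] [Ring A] [Algebra k A]
    (δ : k → k) (d : A → A) : Prop :=
  ∀ c : k, d (algebraMap k A c) = algebraMap k A (δ c)

/-- The differential algebra `(Q, d)` over `(k, δk)` is split by the differential field
`(L, δL)`: there is an `L`-algebra isomorphism `L ⊗[k] Q ≃ M₂(L)` intertwining the
induced derivation `d* = δL ⊗ id + id ⊗ d` with the coordinate-wise derivation on `M₂(L)`. -/
def DiffSplits (k : Type*) [Field k] (Q : Type*) [Ring Q] [Algebra k Q]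
    (d : Q → Q) (L : Type*) [Field L] [Algebra k L] (δL : L → L) : Prop :=
  ∃ D : L ⊗[k] Q → L ⊗[k] Q,
    IsRingDeriv D ∧
    (∀ (y : L) (x : Q), D (y ⊗ₜ[k] x) = δL y ⊗ₜ[k] x + y ⊗ₜ[k] d x) ∧
    ∃ φ : (L ⊗[k] Q) ≃ₐ[L] Matrix (Fin 2) (Fin 2) L,
      ∀ z, φ (D z) = (φ z).map δL

/-- The transcendence degree of `L` over `k` is at least `n`: there are `n` algebraically
independent elements. -/
def TrdegGE (k L : Type*) [CommRing k] [CommRing L] [Algebra k L] (n : ℕ) : Prop :=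
  ∃ f : Fin n → L, AlgebraicIndependent k f

/-- The transcendence degree of `L` over `k` is at most `n`: there is no algebraically
independent family of `n + 1` elements. -/
def TrdegLE (k L : Type*) [CommRing k] [CommRing L] [Algebra k L] (n : ℕ) : Prop :=
  ∀ f : Fin (n + 1) → L, ¬ AlgebraicIndependent k f

/-!
If `(Q, d)` splits over `L`, then `u` and `v` become `2 × 2` matrices `U`, `V` over `L`. Let
`e` be a fixed vector of `U`. Its second coordinate is nonzero, since otherwise `(1, 0)` would be
fixed and differentiation would give `V (1, 0) = 0`; normalize `e = (q, 1)`. Differentiating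
`U e = e` and `V e = (q r + h, r)` shows that `r′ = t - r ^ 2`, `h′ = -2 r h` and `q′ = h`, and
`h ≠ 0` because `V e` is an eigenvector of `U` for `-1`.

The derivation `∂_t + (t - r ^ 2) ∂_r` has no Darboux polynomials involving `r`. Give `r` weight `1`
and `t` weight `2`: the top component of a Darboux polynomial is killed by the action of `e + f` in
`sl₂` on binary forms, an operator self-adjoint for the apolar form. Pairing with that component
eliminates the operator from the lower terms of the equation, and positivity of the apolar form on
forms with rational coefficients then forces degree `0`.

Hence `r` is transcendental over `k`, and a solution in `k(r)` of a linear equation over `k[r]`,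
its denominator being a Darboux polynomial, lies in `k[r]`. Comparing coefficients, neither
`g′ = c r g` (with `c ≠ 0`, `g ≠ 0`) nor `g′ = 2 r g + 1` is solvable there. The first makes the
exponential `h` transcendental over `k(r)`; together they make its primitive `q` transcendental over
`k(r, h)`.
-/

open scoped IntermediateField Matrix
open Polynomial Differential
open Finset (range sum_range_succ sum_range_succ' sum_congr sum_eq_zero_iff_of_nonneg)

section Apolar

variable {F : Type*} [Field F]

/-- The operator `p ↦ (1 - X²) p′ + n X p`, i.e. the action of the hyperbolic element `e + f` of
`sl₂` on binary forms of degree `n`, dehomogenized. -/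
noncomputable def hyperbolicOp (n : ℕ) (p : F[X]) : F[X] :=
  (1 - X ^ 2) * derivative p + (n : F[X]) * X * p

/-- The `sl₂`-contravariant (apolar) form on binary forms of degree `n`, dehomogenized and
extended to all polynomials by ignoring the coefficients of index above `n`. -/
noncomputable def apolarForm (n : ℕ) : LinearMap.BilinForm F F[X] :=
  ∑ i ∈ range (n + 1), (n.choose i : F)⁻¹ • LinearMap.BilinForm.linMulLin (lcoeff F i) (lcoeff F i)

lemma apolarForm_apply (n : ℕ) (p q : F[X]) :
    apolarForm n p q = ∑ i ∈ range (n + 1), (n.choose i : F)⁻¹ * (p.coeff i * q.coeff i) := by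
  simp [apolarForm, LinearMap.sum_apply]

lemma apolarForm_comm (n : ℕ) (p q : F[X]) : apolarForm n p q = apolarForm n q p := by
  simp only [apolarForm_apply, mul_comm (p.coeff _)]

lemma coeff_hyperbolicOp_zero (n : ℕ) (p : F[X]) : (hyperbolicOp n p).coeff 0 = p.coeff 1 := by
  simp [hyperbolicOp, sub_mul, mul_coeff_zero, coeff_derivative]

lemma coeff_hyperbolicOp_succ (n i : ℕ) (p : F[X]) :
    (hyperbolicOp n p).coeff (i + 1) = (n - i) * p.coeff i + (i + 2) * p.coeff (i + 2) := by
  have hX2 : (X ^ 2 * derivative p).coeff (i + 1) = i * p.coeff i := by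
    cases i with
    | zero => simp [coeff_X_pow_mul']
    | succ i => rw [coeff_X_pow_mul, coeff_derivative]; push_cast; ring
  have hnX : ((n : F[X]) * X * p).coeff (i + 1) = n * p.coeff i := by
    rw [mul_assoc, ← C_eq_natCast, coeff_C_mul, coeff_X_mul]
  rw [hyperbolicOp, sub_mul, one_mul, coeff_add, coeff_sub, hX2, hnX, coeff_derivative]
  push_cast
  ring

variable [CharZero F]

lemma apolarForm_hyperbolicOp_right {n : ℕ} (p : F[X]) {q : F[X]} (hq : q.natDegree ≤ n) :
    apolarForm n p (hyperbolicOp n q) = ∑ i ∈ range n,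
      (n.choose i : F)⁻¹ * (i + 1) *
        (p.coeff i * q.coeff (i + 1) + p.coeff (i + 1) * q.coeff i) := by
  have hchoose : ∀ i ∈ range n,
      (n.choose (i + 1) : F)⁻¹ * (n - i) = (n.choose i : F)⁻¹ * (i + 1) := fun i hi ↦ by
    have hin := Finset.mem_range.1 hi
    have h₁ : (n.choose (i + 1) : F) ≠ 0 := mod_cast (Nat.choose_pos hin).ne'
    have h₂ : (n.choose i : F) ≠ 0 := mod_cast (Nat.choose_pos hin.le).ne'
    have h := congrArg (Nat.cast (R := F)) (Nat.choose_succ_right_eq n i)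
    rw [Nat.cast_mul, Nat.cast_mul, Nat.cast_sub hin.le] at h
    field_simp
    push_cast at h
    linear_combination -h
  have hcoeff (i : ℕ) : (hyperbolicOp n q).coeff i
      = (i + 1) * q.coeff (i + 1) + if i = 0 then 0 else (n - i + 1) * q.coeff (i - 1) := by
    cases i with
    | zero => simp [coeff_hyperbolicOp_zero]
    | succ i =>
      rw [coeff_hyperbolicOp_succ]
      simp only [Nat.cast_add, Nat.cast_one, Nat.add_eq_zero_iff, one_ne_zero, and_false, if_false,
        Nat.add_sub_cancel]
      ring
  have htop : q.coeff (n + 1) = 0 := coeff_eq_zero_of_natDegree_lt (by omega)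
  simp only [apolarForm_apply, hcoeff, mul_add, Finset.sum_add_distrib]
  rw [sum_range_succ, htop, sum_range_succ' _ n]
  simp only [mul_zero, add_zero, if_true]
  congr 1
  · exact sum_congr rfl fun i _ ↦ by ring
  · refine sum_congr rfl fun i hi ↦ ?_
    simp only [Nat.add_eq_zero_iff, one_ne_zero, and_false, if_false, Nat.add_sub_cancel]
    push_cast
    linear_combination p.coeff (i + 1) * q.coeff i * hchoose i hi

lemma apolarForm_hyperbolicOp_comm {n : ℕ} {p q : F[X]} (hp : p.natDegree ≤ n)
    (hq : q.natDegree ≤ n) :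
    apolarForm n p (hyperbolicOp n q) = apolarForm n (hyperbolicOp n p) q := by
  rw [apolarForm_comm n _ q, apolarForm_hyperbolicOp_right p hq, apolarForm_hyperbolicOp_right q hp]
  exact sum_congr rfl fun i _ ↦ by ring

lemma exists_rat_coeff_eq_of_hyperbolicOp_eq_zero {n : ℕ} {p : F[X]} (h : hyperbolicOp n p = 0)
    (i : ℕ) : ∃ y : ℚ, p.coeff i = y * p.coeff 0 := by
  induction i using Nat.twoStepInduction with
  | zero => exact ⟨1, by simp⟩
  | one => exact ⟨0, by simpa [coeff_hyperbolicOp_zero] using congrArg (coeff · 0) h⟩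
  | more i ih _ =>
    obtain ⟨y, hy⟩ := ih
    have hrec : (n - i) * p.coeff i + (i + 2) * p.coeff (i + 2) = 0 := by
      rw [← coeff_hyperbolicOp_succ, h, coeff_zero]
    have hi : (i + 2 : F) ≠ 0 := mod_cast (i + 1).succ_ne_zero
    refine ⟨-(n - i) * y / (i + 2), ?_⟩
    push_cast
    field_simp
    linear_combination hrec - (n - i : F) * hy

/-- On the kernel of `hyperbolicOp n` the apolar form is definite, although `F` carries no order:
all elements of the kernel are multiples of polynomials with rational coefficients. -/
lemma coeff_eq_zero_of_apolarForm_eq_zero {n : ℕ} {p q : F[X]} (h : hyperbolicOp n p = 0)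
    (w : ℕ → ℕ) (hq : ∀ i, q.coeff i = w i * p.coeff i) (hpq : apolarForm n p q = 0)
    {i : ℕ} (hi : i ≤ n) : q.coeff i = 0 := by
  choose y hy using exists_rat_coeff_eq_of_hyperbolicOp_eq_zero h
  by_cases hp0 : p.coeff 0 = 0
  · simp [hq, hy i, hp0]
  have hcast : ((∑ i ∈ range (n + 1), (n.choose i : ℚ)⁻¹ * w i * y i ^ 2 : ℚ) : F)
      * p.coeff 0 ^ 2 = 0 := by
    rw [← hpq, apolarForm_apply]
    push_cast
    rw [Finset.sum_mul]
    refine sum_congr rfl fun i _ ↦ ?_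
    rw [hq, hy i]
    ring
  have hsum := (mul_eq_zero.1 hcast).resolve_right (pow_ne_zero 2 hp0)
  rw [Rat.cast_eq_zero, sum_eq_zero_iff_of_nonneg fun i _ ↦ by positivity] at hsum
  have hchoose : (n.choose i : ℚ)⁻¹ ≠ 0 := inv_ne_zero (mod_cast (Nat.choose_pos hi).ne')
  rcases mul_eq_zero.1 (hsum i (Finset.mem_range.2 (by omega))) with hw | hyi
  · have : w i = 0 := by simpa [hchoose] using hw
    simp [hq, this]
  · simp [hq, hy i, pow_eq_zero_iff two_ne_zero |>.1 hyi]

lemma apolarForm_self_ne_zero {n : ℕ} {p : F[X]} (h : hyperbolicOp n p = 0)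
    (hn : p.natDegree ≤ n) (hp : p ≠ 0) : apolarForm n p p ≠ 0 := fun hpp ↦ hp <| ext fun i ↦ by
  rcases le_or_gt i n with hi | hi
  · exact coeff_eq_zero_of_apolarForm_eq_zero h 1 (by simp) hpp hi
  · exact coeff_eq_zero_of_natDegree_lt (hn.trans_lt hi)

lemma coeff_zero_ne_zero_of_hyperbolicOp_eq_zero {n : ℕ} {p : F[X]} (h : hyperbolicOp n p = 0)
    (hp : p ≠ 0) : p.coeff 0 ≠ 0 := fun hp0 ↦ hp <| ext fun i ↦ by
  obtain ⟨y, hy⟩ := exists_rat_coeff_eq_of_hyperbolicOp_eq_zero h i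
  rw [hy, hp0, mul_zero, coeff_zero]

end Apolar

/-- `d/dt` on `F[t]`. -/
noncomputable instance instDifferentialPolynomial (F : Type*) [CommRing F] : Differential F[X] :=
  ⟨derivative'.restrictScalars ℤ⟩

lemma deriv_polynomial {F : Type*} [CommRing F] (p : F[X]) : p′ = derivative p := rfl

section WeightSubst

variable {F : Type*} [Field F]

/-- The substitution `t = s²`, `r = s Z` from `F[t][r]` to `F[Z][s]`: the `s`-coefficients of the
result are the homogeneous components for the grading in which `r` and `t` have weights `1`
and `2`. -/
noncomputable def weightSubst (F : Type*) [Field F] : F[X][X] →+* F[X][X] :=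
  eval₂RingHom ((mapRingHom C).comp (expand F 2 : F[X] →+* F[X])) (C X * X)

lemma weightSubst_monomial (i : ℕ) (a : F[X]) :
    weightSubst F (monomial i a) = (expand F 2 a).map C * (C X * X) ^ i := by
  simp [weightSubst]

lemma weightSubst_C_C (a : F) : weightSubst F (C (C a)) = C (C a) := by simp [weightSubst]

lemma weightSubst_C_X : weightSubst F (C X) = X ^ 2 := by simp [weightSubst]

lemma weightSubst_X : weightSubst F X = C X * X := by simp [weightSubst]

lemma coeff_coeff_weightSubst (f : F[X][X]) (j i : ℕ) :
    ((weightSubst F f).coeff j).coeff i = (X ^ i * expand F 2 (f.coeff i)).coeff j := by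
  induction f using Polynomial.induction_on' with
  | add f g hf hg => simp [mul_add, hf, hg]
  | monomial m a =>
    have hmul : weightSubst F (monomial m a) = C (X ^ m) * ((expand F 2 a).map C * X ^ m) := by
      rw [weightSubst_monomial, mul_pow, C_pow]; ring
    have hC : (expand F 2 a).map C * X ^ m = (expand F 2 a * X ^ m).map C := by simp
    rw [hmul, hC, coeff_C_mul, coeff_map, coeff_mul_C, coeff_X_pow, coeff_monomial]
    rcases eq_or_ne i m with rfl | hne
    · simp [mul_comm]
    · simp [hne, hne.symm]

lemma weightSubst_injective : Function.Injective (weightSubst F) := by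
  refine (injective_iff_map_eq_zero _).2 fun f hf ↦ ext fun i ↦ ?_
  have hexpand : X ^ i * expand F 2 (f.coeff i) = 0 := ext fun j ↦ by
    rw [← coeff_coeff_weightSubst, hf]; simp
  simpa [expand_eq_zero two_pos] using hexpand

lemma natDegree_coeff_weightSubst_le_natDegree (f : F[X][X]) (j : ℕ) :
    ((weightSubst F f).coeff j).natDegree ≤ f.natDegree :=
  natDegree_le_iff_coeff_eq_zero.2 fun i hi ↦ by
    simp [coeff_coeff_weightSubst, coeff_eq_zero_of_natDegree_lt hi]

lemma natDegree_coeff_weightSubst_le (f : F[X][X]) (j : ℕ) :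
    ((weightSubst F f).coeff j).natDegree ≤ j :=
  natDegree_le_iff_coeff_eq_zero.2 fun i hi ↦ by
    rw [coeff_coeff_weightSubst, coeff_X_pow_mul', if_neg (by omega)]

/-- `weightSubst` carries `D = ∂_t + (t - r²) ∂_r` to
`(2 s²)⁻¹ (s ∂_s + (2 s³ (1 - Z²) - Z) ∂_Z)`. -/
lemma weightSubst_implicitDeriv (f : F[X][X]) :
    2 * X ^ 2 * weightSubst F (implicitDeriv (C X - X ^ 2) f) =
      X * derivative (weightSubst F f)
        + (2 * X ^ 3 * C (1 - X ^ 2) - C X) * mapCoeffs (weightSubst F f) := by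
  let E : Derivation ℤ F[X][X] F[X][X] := (X : F[X][X]) • derivative'.restrictScalars ℤ
    + (2 * X ^ 3 * C (1 - X ^ 2) - C X : F[X][X]) • mapCoeffs
  have hE (p : F[X][X]) :
      E p = X * derivative p + (2 * X ^ 3 * C (1 - X ^ 2) - C X) * mapCoeffs p := rfl
  let Intertwines (f : F[X][X]) : Prop :=
    2 * X ^ 2 * weightSubst F (implicitDeriv (C X - X ^ 2) f) = E (weightSubst F f)
  change Intertwines f
  have h_const (a : F) : Intertwines (C (C a)) := by
    simp [Intertwines, hE, weightSubst_C_C, deriv_polynomial]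
  have h_t : Intertwines (C X) := by
    simp only [Intertwines, hE, map_sub, map_one, map_pow, implicitDeriv_C, mapCoeffs_X,
      deriv_polynomial, derivative_X, derivative_X_pow, Derivation.leibniz_pow, weightSubst_C_X,
      smul_eq_mul, Nat.cast_ofNat, C_ofNat]
    ring
  have h_r : Intertwines X := by
    simp only [Intertwines, hE, map_sub, map_one, map_pow, implicitDeriv_X, mapCoeffs_X,
      mapCoeffs_C, deriv_polynomial, derivative_X, derivative_C, derivative_mul, Derivation.leibniz,
      weightSubst_C_X, weightSubst_X, smul_eq_mul]
    ring
  have h_add {f g : F[X][X]} (hf : Intertwines f) (hg : Intertwines g) : Intertwines (f + g) := by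
    simp only [Intertwines, map_add, mul_add] at hf hg ⊢
    rw [hf, hg]
  have h_mul {f g : F[X][X]} (hf : Intertwines f) (hg : Intertwines g) : Intertwines (f * g) := by
    simp only [Intertwines, Derivation.leibniz, map_mul, map_add, smul_eq_mul] at hf hg ⊢
    rw [← hf, ← hg]
    ring
  induction f using Polynomial.induction_on with
  | add f g hf hg => exact h_add hf hg
  | C a =>
    induction a using Polynomial.induction_on with
    | add a b ha hb => simpa only [C_add] using h_add ha hb
    | C a => exact h_const a
    | monomial n a h => simpa only [pow_succ, ← mul_assoc, C_mul] using h_mul h h_t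
  | monomial n a h => simpa only [pow_succ, ← mul_assoc] using h_mul h h_r

end WeightSubst

section RiccatiDarboux

variable {F : Type*} [Field F]

/-- `hyperbolicOp n` applied to each coefficient. -/
noncomputable def hyperbolicOpCoeffs (n : ℕ) (H : F[X][X]) : F[X][X] :=
  C (1 - X ^ 2) * mapCoeffs H + C ((n : F[X]) * X) * H

lemma coeff_hyperbolicOpCoeffs (n : ℕ) (H : F[X][X]) (j : ℕ) :
    (hyperbolicOpCoeffs n H).coeff j = hyperbolicOp n (H.coeff j) := by
  rw [hyperbolicOpCoeffs, coeff_add, coeff_C_mul, coeff_C_mul, coeff_mapCoeffs, deriv_polynomial,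
    hyperbolicOp]

lemma natDegree_hyperbolicOpCoeffs_le (n : ℕ) (H : F[X][X]) :
    (hyperbolicOpCoeffs n H).natDegree ≤ H.natDegree :=
  natDegree_le_iff_coeff_eq_zero.2 fun j hj ↦ by
    simp [coeff_hyperbolicOpCoeffs, coeff_eq_zero_of_natDegree_lt hj, hyperbolicOp]

lemma natDegree_mapCoeffs_le {A : Type*} [CommRing A] [Differential A] (p : A[X]) :
    (mapCoeffs p).natDegree ≤ p.natDegree :=
  natDegree_le_iff_coeff_eq_zero.2 fun j hj ↦ by
    rw [coeff_mapCoeffs, coeff_eq_zero_of_natDegree_lt hj, map_zero]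

lemma coeff_X_mul_derivative {R : Type*} [CommSemiring R] (p : R[X]) (i : ℕ) :
    (X * derivative p).coeff i = i * p.coeff i := by
  cases i <;> simp [coeff_derivative, mul_comm]

lemma weightSubst_riccati_darboux {f : F[X][X]} {μ : F[X]} {n : ℕ}
    (hf : implicitDeriv (C X - X ^ 2) f = (C μ - (n : F[X][X]) * X) * f) :
    X * derivative (weightSubst F f) + 2 * X ^ 3 * hyperbolicOpCoeffs n (weightSubst F f) =
      C X * mapCoeffs (weightSubst F f)
        + 2 * X ^ 2 * (expand F 2 μ).map C * weightSubst F f := by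
  have hμ : weightSubst F (C μ) = (expand F 2 μ).map C := by
    simpa using weightSubst_monomial 0 μ
  have h := weightSubst_implicitDeriv f
  rw [hf, map_mul, map_sub, map_mul, map_natCast, weightSubst_X, hμ] at h
  rw [hyperbolicOpCoeffs, C_mul, C_eq_natCast]
  linear_combination -h

variable {n : ℕ} {H : F[X][X]}

lemma coeff_weighted_darboux {c : F}
    (h : X * derivative H + 2 * X ^ 3 * hyperbolicOpCoeffs n H =
      C X * mapCoeffs H + 2 * X ^ 2 * C (C c) * H) (j : ℕ) :
    (j : F) • H.coeff j - X * derivative (H.coeff j) =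
      (2 * c) • (X ^ 2 * H).coeff j - (2 : F) • (X ^ 3 * hyperbolicOpCoeffs n H).coeff j := by
  have hj := congrArg (coeff · j) h
  have h₁ : 2 * X ^ 3 * hyperbolicOpCoeffs n H = C (C 2) * (X ^ 3 * hyperbolicOpCoeffs n H) := by
    simp only [C_ofNat, mul_assoc]
  have h₂ : 2 * X ^ 2 * C (C c) * H = C (C (2 * c)) * (X ^ 2 * H) := by
    simp only [C_mul, C_ofNat]
    ring
  simp only [coeff_add, coeff_X_mul_derivative, h₁, h₂, coeff_C_mul, coeff_mapCoeffs,
    deriv_polynomial] at hj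
  simp only [smul_eq_C_mul, C_eq_natCast]
  linear_combination hj

variable [CharZero F]

lemma natDegree_eq_zero_of_weighted_darboux (hH : H ≠ 0) {μ : F[X]}
    (h : X * derivative H + 2 * X ^ 3 * hyperbolicOpCoeffs n H =
      C X * mapCoeffs H + 2 * X ^ 2 * (expand F 2 μ).map C * H) : μ.natDegree = 0 := by
  by_contra hμ
  have hμ0 : (expand F 2 μ).map C ≠ (0 : F[X][X]) := by
    rw [Ne, Polynomial.map_eq_zero_iff C_injective, expand_eq_zero two_pos]
    rintro rfl
    exact hμ natDegree_zero
  have h2X : ((2 : F[X][X]) * X ^ 2).natDegree = 2 := by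
    rw [← C_ofNat, natDegree_C_mul_X_pow _ _ two_ne_zero]
  have hdeg : (2 * X ^ 2 * (expand F 2 μ).map C * H).natDegree
      = 2 + μ.natDegree * 2 + H.natDegree := by
    have h2X0 : (2 : F[X][X]) * X ^ 2 ≠ 0 := by simp
    rw [natDegree_mul (mul_ne_zero h2X0 hμ0) hH, natDegree_mul h2X0 hμ0, h2X,
      natDegree_map_eq_of_injective C_injective, natDegree_expand]
  have hX : (X * derivative H).natDegree ≤ H.natDegree + 3 := by
    have h₁ := natDegree_derivative_le H
    exact (natDegree_mul_le_of_le natDegree_X_le h₁).trans (by omega)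
  have hZ : (C X * mapCoeffs H).natDegree ≤ H.natDegree + 3 :=
    (natDegree_C_mul_le _ _).trans ((natDegree_mapCoeffs_le H).trans (by omega))
  have hK : (2 * X ^ 3 * hyperbolicOpCoeffs n H).natDegree ≤ H.natDegree + 3 := by
    have h₂ := natDegree_hyperbolicOpCoeffs_le n H
    rw [mul_assoc, ← C_ofNat]
    refine (natDegree_C_mul_le _ _).trans ?_
    exact (natDegree_mul_le_of_le (natDegree_X_pow_le 3) h₂).trans (by omega)
  have hle := natDegree_sub_le_of_le (natDegree_add_le_of_le hX hK) hZ
  rw [h, add_sub_cancel_left, hdeg] at hle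
  omega

lemma hyperbolicOp_leadingCoeff_of_weighted_darboux {c : F}
    (h : X * derivative H + 2 * X ^ 3 * hyperbolicOpCoeffs n H =
      C X * mapCoeffs H + 2 * X ^ 2 * C (C c) * H) : hyperbolicOp n H.leadingCoeff = 0 := by
  have habove {j : ℕ} (hj : H.natDegree < j) : H.coeff j = 0 := coeff_eq_zero_of_natDegree_lt hj
  have h₃ := coeff_weighted_darboux h (H.natDegree + 3)
  rw [coeff_X_pow_mul _ 3, coeff_hyperbolicOpCoeffs, coeff_X_pow_mul' _ 2, if_pos (by omega),
    habove (by omega), habove (by omega)] at h₃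
  simpa using h₃

lemma apolarForm_leadingCoeff_weighted_darboux (hn : ∀ j, (H.coeff j).natDegree ≤ n) {c : F}
    (h : X * derivative H + 2 * X ^ 3 * hyperbolicOpCoeffs n H =
      C X * mapCoeffs H + 2 * X ^ 2 * C (C c) * H) (j : ℕ) :
    apolarForm n H.leadingCoeff ((j : F) • H.coeff j - X * derivative (H.coeff j)) =
      2 * c * apolarForm n H.leadingCoeff ((X ^ 2 * H).coeff j) := by
  have horth : apolarForm n H.leadingCoeff ((X ^ 3 * hyperbolicOpCoeffs n H).coeff j) = 0 := by
    rw [coeff_X_pow_mul', coeff_hyperbolicOpCoeffs]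
    split_ifs
    · rw [← coeff_natDegree, apolarForm_hyperbolicOp_comm (hn _) (hn _), coeff_natDegree,
        hyperbolicOp_leadingCoeff_of_weighted_darboux h, map_zero, LinearMap.zero_apply]
    · exact map_zero _
  rw [coeff_weighted_darboux h, map_sub, map_smul, map_smul, horth, smul_zero, sub_zero,
    smul_eq_mul]

/-- The leading coefficient `p` of `H` lies in the kernel of the self-adjoint operator
`hyperbolicOp n`, so pairing the lower coefficients of the equation with `p` removes that operator;
what remains kills first `c` and then the degree. -/
lemma eq_zero_of_weighted_darboux (hH : H ≠ 0) (hn : ∀ j, (H.coeff j).natDegree ≤ n)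
    (hdeg : ∀ j, (H.coeff j).natDegree ≤ j) {c : F}
    (h : X * derivative H + 2 * X ^ 3 * hyperbolicOpCoeffs n H =
      C X * mapCoeffs H + 2 * X ^ 2 * C (C c) * H) : n = 0 := by
  set N := H.natDegree with hN
  have hp0 : H.coeff N ≠ 0 := leadingCoeff_ne_zero.2 hH
  have hker : hyperbolicOp n (H.coeff N) = 0 := hyperbolicOp_leadingCoeff_of_weighted_darboux h
  have hpair := apolarForm_leadingCoeff_weighted_darboux hn h
  rw [leadingCoeff, ← hN] at hpair
  set p := H.coeff N with hp
  have hp00 : p.coeff 0 ≠ 0 := coeff_zero_ne_zero_of_hyperbolicOp_eq_zero hker hp0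
  have hc : c = 0 := by
    have h₂ := hpair (N + 2)
    rw [coeff_eq_zero_of_natDegree_lt (by omega), coeff_X_pow_mul, ← hp] at h₂
    simpa [apolarForm_self_ne_zero hker (hn N) hp0] using h₂.symm
  have hN0 : N = 0 := by
    have hcoeff (i : ℕ) : ((N : F) • p - X * derivative p).coeff i
        = ((N - i : ℕ) : F) * p.coeff i := by
      rw [coeff_sub, coeff_smul, coeff_X_mul_derivative, smul_eq_mul]
      rcases le_or_gt i N with hi | hi
      · rw [Nat.cast_sub hi, sub_mul]
      · have hpi : p.coeff i = 0 := coeff_eq_zero_of_natDegree_lt ((hdeg N).trans_lt hi)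
        simp only [hpi, mul_zero, sub_zero]
    have horth := hpair N
    rw [hc, mul_zero, zero_mul] at horth
    have hNp := coeff_eq_zero_of_apolarForm_eq_zero hker (N - ·) hcoeff horth (Nat.zero_le n)
    rw [hcoeff, Nat.sub_zero] at hNp
    exact_mod_cast (mul_eq_zero.1 hNp).resolve_right hp00
  have hp2 : p.coeff 2 = 0 := coeff_eq_zero_of_natDegree_lt ((hdeg N).trans_lt (by omega))
  have h₁ := coeff_hyperbolicOp_succ n 0 p
  rw [hker] at h₁
  simpa [hp2, hp00] using h₁

theorem natDegree_eq_zero_of_riccati_darboux {f : F[X][X]} (hf : f ≠ 0) {μ : F[X]}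
    (h : implicitDeriv (C X - X ^ 2) f = (C μ - (f.natDegree : F[X][X]) * X) * f) :
    f.natDegree = 0 := by
  have hH : weightSubst F f ≠ 0 := (map_ne_zero_iff _ weightSubst_injective).2 hf
  have heq := weightSubst_riccati_darboux h
  obtain ⟨c, rfl⟩ := natDegree_eq_zero.1 (natDegree_eq_zero_of_weighted_darboux hH heq)
  rw [expand_C, map_C] at heq
  exact eq_zero_of_weighted_darboux hH (natDegree_coeff_weightSubst_le_natDegree f)
    (natDegree_coeff_weightSubst_le f) heq

end RiccatiDarboux

section Darboux

/-- `P` is a Darboux polynomial of the derivation extending that of `A` with `X′ = v`: it divides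
its own derivative. -/
def IsDarboux {A : Type*} [CommRing A] [Differential A] (v P : A[X]) : Prop :=
  P ∣ implicitDeriv v P

/-- The derivation with `X′ = v` has no Darboux polynomial of positive degree, i.e. constants are
its only Darboux polynomials. -/
def OnlyConstantDarboux {A : Type*} [CommRing A] [Differential A] (v : A[X]) : Prop :=
  ∀ ⦃P : A[X]⦄, P ≠ 0 → IsDarboux v P → P.natDegree = 0

lemma implicitDeriv_apply {A : Type*} [CommRing A] [Differential A] (v p : A[X]) :
    implicitDeriv v p = mapCoeffs p + v * derivative p := rfl

lemma IsDarboux.C_mul {K : Type*} [Field K] [Differential K] {v P : K[X]} (hP : IsDarboux v P)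
    (c : K) : IsDarboux v (C c * P) := by
  rcases eq_or_ne c 0 with rfl | hc
  · simp [IsDarboux]
  obtain ⟨g, hg⟩ := hP
  refine ⟨g + C (c′ / c), ?_⟩
  have hcc : C c * C (c′ / c) = C c′ := by rw [← Polynomial.C_mul, mul_div_cancel₀ _ hc]
  rw [Derivation.leibniz, implicitDeriv_C, hg, smul_eq_mul, smul_eq_mul, ← hcc]
  ring

lemma implicitDeriv_map {R A : Type*} [CommRing R] [CommRing A] [Algebra R A] [Differential R]
    [Differential A] [DifferentialAlgebra R A] (v f : R[X]) :
    implicitDeriv (v.map (algebraMap R A)) (f.map (algebraMap R A)) =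
      (implicitDeriv v f).map (algebraMap R A) := by
  ext i
  simp [implicitDeriv_apply, ← Polynomial.map_mul, derivative_map, deriv_algebraMap]

variable {R k : Type*} [CommRing R] [IsDomain R] [Field k] [Algebra R k] [IsFractionRing R k]

lemma exists_isPrimitive_map_eq_C_mul [NormalizedGCDMonoid R] {P : k[X]} (hP : P ≠ 0) :
    ∃ f : R[X], f.IsPrimitive ∧ ∃ c : k, c ≠ 0 ∧ f.map (algebraMap R k) = C c * P := by
  classical
  obtain ⟨b, hb, hbP⟩ := IsLocalization.integerNormalization_spec (nonZeroDivisors R) P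
  set f := IsLocalization.integerNormalization (nonZeroDivisors R) P
  have hb0 : algebraMap R k b ≠ 0 := by simpa using nonZeroDivisors.ne_zero hb
  have hfP : f.map (algebraMap R k) = C (algebraMap R k b) * P := by
    rw [hbP, ← algebraMap_smul k, smul_eq_C_mul]
  have hcont : algebraMap R k f.content ≠ 0 := by
    have hf : f ≠ 0 := by
      intro hf
      simp [hf, hb0, hP] at hfP
    simpa [content_eq_zero_iff] using hf
  refine ⟨f.primPart, f.isPrimitive_primPart, (algebraMap R k f.content)⁻¹ * algebraMap R k b,
    mul_ne_zero (inv_ne_zero hcont) hb0, ?_⟩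
  rw [f.eq_C_content_mul_primPart, Polynomial.map_mul, map_C] at hfP
  rw [Polynomial.C_mul, mul_assoc, ← hfP, ← mul_assoc, ← Polynomial.C_mul, inv_mul_cancel₀ hcont,
    C_1, one_mul]

lemma onlyConstantDarboux_map [NormalizedGCDMonoid R] [Differential R] [Differential k]
    [DifferentialAlgebra R k] {v : R[X]} (h : OnlyConstantDarboux v) :
    OnlyConstantDarboux (v.map (algebraMap R k)) := by
  intro P hP hPv
  obtain ⟨f, hf, c, hc, hfP⟩ := exists_isPrimitive_map_eq_C_mul (R := R) hP
  have hdvd : f ∣ implicitDeriv v f := hf.dvd_of_fraction_map_dvd_fraction_map (K := k) <| by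
    rw [← implicitDeriv_map (A := k), hfP]
    exact hPv.C_mul c
  rw [← natDegree_C_mul hc, ← hfP, natDegree_map_eq_of_injective (IsFractionRing.injective R k)]
  exact h hf.ne_zero hdvd

end Darboux

section Riccati

variable {A : Type*} [CommRing A] [Differential A]

lemma coeff_implicitDeriv_riccati (a : A) (f : A[X]) (i : ℕ) :
    (implicitDeriv (C a - X ^ 2) f).coeff (i + 1) =
      (f.coeff (i + 1))′ + a * (f.coeff (i + 2) * (i + 2)) - i * f.coeff i := by
  have hX2 : X ^ 2 * derivative f = X * (X * derivative f) := by ring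
  rw [implicitDeriv_apply, coeff_add, coeff_mapCoeffs, sub_mul, coeff_sub, coeff_C_mul, hX2,
    coeff_X_mul, coeff_X_mul_derivative, coeff_derivative]
  push_cast
  ring

lemma exists_cofactor_of_isDarboux_riccati [IsDomain A] {a : A} {f : A[X]} (hf : f ≠ 0)
    (h : IsDarboux (C a - X ^ 2) f) :
    ∃ μ : A, implicitDeriv (C a - X ^ 2) f = (C μ - (f.natDegree : A[X]) * X) * f := by
  obtain ⟨g, hg⟩ := h
  set n := f.natDegree with hn
  have hf0 {i : ℕ} (hi : n < i) : f.coeff i = 0 := coeff_eq_zero_of_natDegree_lt hi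
  have hdeg : (f * g).natDegree ≤ n + 1 := natDegree_le_iff_coeff_eq_zero.2 fun i hi ↦ by
    obtain ⟨i, rfl⟩ : ∃ j, i = j + 1 := ⟨i - 1, by omega⟩
    rw [← hg, coeff_implicitDeriv_riccati, hf0 (by omega), hf0 (by omega), hf0 (by omega)]
    simp
  have hgdeg : g.natDegree ≤ 1 := by
    rcases eq_or_ne g 0 with rfl | hg0
    · simp
    · rw [natDegree_mul hf hg0] at hdeg
      omega
  have hg1 : g.coeff 1 = -(n : A) := by
    have htop := coeff_mul_add_eq_of_natDegree_le hn.ge hgdeg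
    rw [← hg, coeff_implicitDeriv_riccati, hf0 (by omega), hf0 (by omega)] at htop
    refine mul_left_cancel₀ (leadingCoeff_ne_zero.2 hf) ?_
    rw [leadingCoeff, ← hn, ← htop]
    simp [mul_comm]
  refine ⟨g.coeff 0, ?_⟩
  rw [hg, mul_comm f]
  nth_rw 1 [eq_X_add_C_of_natDegree_le_one hgdeg]
  rw [hg1, C_neg, C_eq_natCast]
  ring

theorem onlyConstantDarboux_riccati (F : Type*) [Field F] [CharZero F] :
    OnlyConstantDarboux (C X - X ^ 2 : F[X][X]) := fun f hf h ↦ by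
  obtain ⟨μ, hμ⟩ := exists_cofactor_of_isDarboux_riccati hf h
  exact natDegree_eq_zero_of_riccati_darboux hf hμ

end Riccati

section DifferentialExtension

lemma exists_isCoprime_mul_aeval_eq {K L : Type*} [Field K] [Field L] [Algebra K L] {x : L}
    (hx : Transcendental K x) {g : L} (hg : g ∈ K⟮x⟯) :
    ∃ P Q : K[X], IsCoprime P Q ∧ Q.Monic ∧ g * aeval x Q = aeval x P := by
  set e := RatFunc.algEquivOfTranscendental x hx with he
  set f := e.symm ⟨g, hg⟩ with hf
  refine ⟨f.num, f.denom, f.isCoprime_num_denom, f.monic_denom, ?_⟩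
  have heval (P : K[X]) : (e (algebraMap K[X] (RatFunc K) P) : L) = aeval x P := by
    rw [he, RatFunc.algEquivOfTranscendental_algebraMap]
    exact (aeval_algebraMap_apply L (IntermediateField.AdjoinSimple.gen K x) P).symm
  have hfg : (e f : L) = g := by rw [hf, e.apply_symm_apply]
  have hfrac : f * algebraMap K[X] (RatFunc K) f.denom = algebraMap K[X] (RatFunc K) f.num :=
    ((div_eq_iff (RatFunc.algebraMap_ne_zero f.denom_ne_zero)).1 f.num_div_denom).symm
  rw [← hfg, ← heval, ← heval, ← hfrac, map_mul]
  rfl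

variable {K L : Type*} [Field K] [Field L] [Algebra K L] [Differential K] [Differential L]
  [DifferentialAlgebra K L] {x : L} {v : K[X]}

lemma isDarboux_minpoly (hx : x′ = aeval x v) : IsDarboux v (minpoly K x) :=
  minpoly.dvd K x <| by rw [← deriv_aeval_eq_implicitDeriv x v hx, minpoly.aeval, map_zero]

lemma OnlyConstantDarboux.transcendental (hv : OnlyConstantDarboux v) (hx : x′ = aeval x v) :
    Transcendental K x := fun hx_alg ↦
  (minpoly.natDegree_pos hx_alg.isIntegral).ne'
    (hv (minpoly.ne_zero hx_alg.isIntegral) (isDarboux_minpoly hx))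

lemma deriv_mem_adjoin_simple (hx : x′ ∈ K⟮x⟯) {g : L} (hg : g ∈ K⟮x⟯) : g′ ∈ K⟮x⟯ := by
  induction hg using IntermediateField.adjoin_induction with
  | mem y hy => rwa [Set.mem_singleton_iff.1 hy]
  | algebraMap c => exact deriv_algebraMap (B := L) c ▸ algebraMap_mem _ _
  | add y z _ _ hy hz => exact map_add (deriv : Derivation ℤ L L) y z ▸ add_mem hy hz
  | inv y hy hy' =>
    rw [Derivation.leibniz_inv, smul_eq_mul]
    exact mul_mem (neg_mem (pow_mem (inv_mem hy) 2)) hy'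
  | mul y z hy hz hy' hz' =>
    rw [Derivation.leibniz, smul_eq_mul, smul_eq_mul]
    exact add_mem (mul_mem hy hz') (mul_mem hz hy')

/-- The derivation induced on an intermediate field `M` stable under the derivation of `L`. A
reducible definition rather than an instance, since stability is a hypothesis. -/
@[reducible] def restrictDifferential (M : IntermediateField K L) (hM : ∀ g ∈ M, g′ ∈ M) :
    Differential M where
  deriv := Derivation.mk'
    { toFun := fun g ↦ ⟨(g : L)′, hM g g.2⟩
      map_add' := fun g h ↦ Subtype.ext (by simp)
      map_smul' := fun n g ↦ Subtype.ext (by simp) }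
    fun g h ↦ Subtype.ext (by simp)

lemma exists_isDarboux_of_linear_ode (htr : Transcendental K x) (hx : x′ = aeval x v)
    {a b : K[X]} {g : L} (hg : g ∈ K⟮x⟯) (hode : g′ = aeval x a * g + aeval x b) :
    ∃ P Q : K[X], Q.Monic ∧ IsDarboux v Q ∧ g * aeval x Q = aeval x P ∧
      Q * implicitDeriv v P = P * implicitDeriv v Q + a * P * Q + b * Q ^ 2 := by
  obtain ⟨P, Q, hcop, hmon, hPQ⟩ := exists_isCoprime_mul_aeval_eq htr hg
  have hode_PQ :
      Q * implicitDeriv v P = P * implicitDeriv v Q + a * P * Q + b * Q ^ 2 := by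
    apply transcendental_iff_injective.1 htr
    have hderiv := congrArg (fun y : L ↦ y′) hPQ
    simp only [Derivation.leibniz, smul_eq_mul, deriv_aeval_eq_implicitDeriv x v hx, hode]
      at hderiv
    simp only [map_add, map_mul, map_pow, ← hderiv, ← hPQ]
    ring
  refine ⟨P, Q, hmon, hcop.symm.dvd_of_dvd_mul_left ⟨implicitDeriv v P - a * P - b * Q, ?_⟩, hPQ,
    hode_PQ⟩
  linear_combination -hode_PQ

lemma OnlyConstantDarboux.exists_aeval_eq_of_linear_ode (hv : OnlyConstantDarboux v)
    (hx : x′ = aeval x v) {a b : K[X]} {g : L} (hg : g ∈ K⟮x⟯)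
    (hode : g′ = aeval x a * g + aeval x b) :
    ∃ P : K[X], aeval x P = g ∧ implicitDeriv v P = a * P + b := by
  obtain ⟨P, Q, hmon, hQ, hPQ, hode_PQ⟩ :=
    exists_isDarboux_of_linear_ode (hv.transcendental hx) hx hg hode
  obtain rfl : Q = 1 := hmon.natDegree_eq_zero.1 (hv hmon.ne_zero hQ)
  exact ⟨P, by simpa using hPQ.symm, by simpa using hode_PQ⟩

end DifferentialExtension

section RiccatiExtension

variable {k L : Type*} [Field k] [Field L] [Algebra k L] [Differential k]
  [Differential L] [DifferentialAlgebra k L] {a : k} {r : L}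

lemma eq_zero_of_deriv_eq_mul_riccati (ha : OnlyConstantDarboux (C a - X ^ 2))
    (hr : r′ = algebraMap k L a - r ^ 2) {c : k} (hc : c ≠ 0) {g : L} (hg : g ∈ k⟮r⟯)
    (hode : g′ = algebraMap k L c * r * g) : g = 0 := by
  obtain ⟨P, rfl, hP⟩ := ha.exists_aeval_eq_of_linear_ode (a := C c * X) (b := 0)
    (by simpa using hr) hg (by simpa using hode)
  rw [add_zero] at hP
  by_contra hP0
  have hPconst : P = C (P.coeff 0) := eq_C_of_natDegree_eq_zero <|
    ha (by rintro rfl; exact hP0 (map_zero _)) (Dvd.intro_left _ hP.symm)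
  rw [hPconst, implicitDeriv_C] at hP
  have hcP : c * P.coeff 0 = 0 := by
    simpa [coeff_C_succ, mul_assoc] using (congrArg (coeff · 1) hP).symm
  rw [hPconst, (mul_eq_zero_iff_left hc).1 hcP] at hP0
  simp at hP0

lemma deriv_ne_two_mul_add_one_riccati [CharZero k] (ha : OnlyConstantDarboux (C a - X ^ 2))
    (hr : r′ = algebraMap k L a - r ^ 2) {g : L} (hg : g ∈ k⟮r⟯) : g′ ≠ 2 * r * g + 1 := by
  intro hode
  obtain ⟨P, -, hP⟩ := ha.exists_aeval_eq_of_linear_ode (a := C 2 * X) (b := 1)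
    (by simpa using hr) hg (by simpa [map_ofNat] using hode)
  set n := P.natDegree
  have htop := congrArg (coeff · (n + 1)) hP
  simp only [coeff_implicitDeriv_riccati, coeff_add, mul_assoc, coeff_C_mul, coeff_X_mul,
    coeff_one, coeff_eq_zero_of_natDegree_lt (show P.natDegree < n + 1 by omega),
    coeff_eq_zero_of_natDegree_lt (show P.natDegree < n + 2 by omega)] at htop
  have hlead : ((n + 2 : ℕ) : k) * P.leadingCoeff = 0 := by
    rw [map_zero, zero_mul, mul_zero, add_zero, zero_sub, coeff_natDegree,
      if_neg (Nat.succ_ne_zero n)] at htop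
    push_cast
    linear_combination -htop
  have hP0 : P = 0 := leadingCoeff_eq_zero.1 <|
    (mul_eq_zero_iff_left (Nat.cast_ne_zero.2 (n + 1).succ_ne_zero)).1 hlead
  simp [hP0] at hP

end RiccatiExtension

section ExponentialPrimitive

variable {K L : Type*} [Field K] [Field L] [Algebra K L] [Differential K] [Differential L]
  [DifferentialAlgebra K L]

lemma coeff_implicitDeriv_affine (a b : K) (p : K[X]) (i : ℕ) :
    (implicitDeriv (C a * X + C b) p).coeff i =
      (p.coeff i)′ + i * a * p.coeff i + (i + 1) * b * p.coeff (i + 1) := by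
  rw [implicitDeriv_apply, coeff_add, coeff_mapCoeffs, add_mul, coeff_add, mul_assoc, coeff_C_mul,
    coeff_C_mul, coeff_X_mul_derivative, coeff_derivative]
  ring

lemma implicitDeriv_affine_of_isDarboux {a b : K} {m : K[X]} (hm : m.Monic)
    (h : IsDarboux (C a * X + C b) m) :
    implicitDeriv (C a * X + C b) m = C (m.natDegree * a) * m := by
  refine sub_eq_zero.1 <| eq_zero_of_dvd_of_degree_lt (dvd_sub h (dvd_mul_left m _)) ?_
  rw [degree_eq_natDegree hm.ne_zero, degree_lt_iff_coeff_zero]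
  intro i hi
  rw [coeff_sub, coeff_implicitDeriv_affine, coeff_C_mul,
    coeff_eq_zero_of_natDegree_lt (show m.natDegree < i + 1 by omega)]
  rcases hi.eq_or_lt with rfl | hi
  · simp [hm.coeff_natDegree]
  · simp [coeff_eq_zero_of_natDegree_lt hi]

lemma deriv_coeff_of_isDarboux_affine {a b : K} {m : K[X]} (hm : m.Monic)
    (h : IsDarboux (C a * X + C b) m) (i : ℕ) :
    (m.coeff i)′ = (m.natDegree - i) * a * m.coeff i - (i + 1) * b * m.coeff (i + 1) := by
  have hi := congrArg (coeff · i) (implicitDeriv_affine_of_isDarboux hm h)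
  simp only [coeff_implicitDeriv_affine, coeff_C_mul] at hi
  linear_combination hi

/-- `K` contains no nonzero solution of `g′ = n a g` for an integer `n ≠ 0`: up to constants, no
nontrivial power of an exponential `h′ = a h` lies in `K`. -/
def NoExponentialPower (a : K) : Prop :=
  ∀ ⦃n : ℤ⦄, n ≠ 0 → ∀ ⦃g : K⦄, g′ = n * a * g → g = 0

lemma transcendental_exponential {a : K} (ha : NoExponentialPower a) {h : L} (h0 : h ≠ 0)
    (hh : h′ = algebraMap K L a * h) : Transcendental K h := fun h_alg ↦ by
  have hint := h_alg.isIntegral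
  have hcoeff := deriv_coeff_of_isDarboux_affine (minpoly.monic hint)
    (isDarboux_minpoly (v := C a * X + C 0) (by simpa using hh)) 0
  refine minpoly.coeff_zero_ne_zero hint h0 <|
    ha (Int.natCast_ne_zero.2 (minpoly.natDegree_pos hint).ne') ?_
  simpa using hcoeff

lemma transcendental_primitive [CharZero K] {b : K} (hb : ∀ g : K, g′ ≠ b) {q : L}
    (hq : q′ = algebraMap K L b) : Transcendental K q := fun q_alg ↦ by
  have hm := minpoly.monic q_alg.isIntegral
  obtain ⟨n, hn⟩ := Nat.exists_eq_succ_of_ne_zero (minpoly.natDegree_pos q_alg.isIntegral).ne'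
  have hcoeff := deriv_coeff_of_isDarboux_affine hm
    (isDarboux_minpoly (v := C 0 * X + C b) (by simpa using hq)) n
  have hlead : (minpoly K q).coeff (n + 1) = 1 := by
    simpa only [hn] using hm.coeff_natDegree
  rw [hlead] at hcoeff
  have hn0 : (n + 1 : K) ≠ 0 := n.cast_add_one_ne_zero
  refine hb (-(minpoly K q).coeff n / (n + 1 : ℕ)) ?_
  rw [Derivation.leibniz_div, map_neg, hcoeff, Derivation.map_natCast]
  simp only [smul_eq_mul]
  push_cast
  field_simp
  ring

lemma deriv_ne_exponential {a : K} (ha : NoExponentialPower a) (ha' : ∀ g : K, g′ ≠ -a * g + 1)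
    {h : L} (h0 : h ≠ 0) (hh : h′ = algebraMap K L a * h) {g : L} (hg : g ∈ K⟮h⟯) : g′ ≠ h := by
  intro hgh
  obtain ⟨P, Q, hmon, hQ, -, hPQ⟩ := exists_isDarboux_of_linear_ode
    (v := C a * X + C 0) (a := 0) (b := X) (transcendental_exponential ha h0 hh)
    (by simpa using hh) hg (by simpa using hgh)
  set N := Q.natDegree with hN
  rw [implicitDeriv_affine_of_isDarboux hmon hQ] at hPQ
  have hP : implicitDeriv (C a * X + C 0) P = C (N * a) * P + X * Q :=
    mul_left_cancel₀ hmon.ne_zero (by linear_combination hPQ)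
  have hcoeff := congrArg (coeff · (N + 1)) hP
  simp only [coeff_implicitDeriv_affine, coeff_add, coeff_C_mul, coeff_X_mul, hN,
    hmon.coeff_natDegree] at hcoeff
  refine ha' (P.coeff (N + 1)) ?_
  push_cast at hcoeff
  linear_combination hcoeff

end ExponentialPrimitive

section TranscendenceDegree

lemma TrdegGE.succ_of_transcendental {k A L : Type*} [CommRing k] [CommRing A] [CommRing L]
    [Algebra k A] [Algebra A L] [Algebra k L] [IsScalarTower k A L] {n : ℕ} (h : TrdegGE k A n)
    {x : L} (hx : Transcendental A x) : TrdegGE k L (n + 1) := by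
  obtain ⟨f, hf⟩ := h
  have hx' : AlgebraicIndependent A fun _ : Fin 1 ↦ x := algebraicIndependent_unique_type_iff.2 hx
  exact ⟨_, (hf.sumElim_comp hx').comp _ (finSumFinEquiv.symm.injective.comp
    (finCongr (add_comm n 1)).injective)⟩

lemma TrdegGE.adjoin_simple {k K L : Type*} [Field k] [Field K] [Field L] [Algebra k K]
    [Algebra K L] [Algebra k L] [IsScalarTower k K L] {n : ℕ} (h : TrdegGE k K n) {x : L}
    (hx : Transcendental K x) : TrdegGE k K⟮x⟯ (n + 1) :=
  h.succ_of_transcendental <| (transcendental_algebraMap_iff (algebraMap K⟮x⟯ L).injective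
    (a := IntermediateField.AdjoinSimple.gen K x)).1 hx

theorem trdegGE_three_of_riccati {k L : Type*} [Field k] [CharZero k] [Field L] [Algebra k L]
    [Differential k] [Differential L] [DifferentialAlgebra k L] {a : k}
    (ha : OnlyConstantDarboux (C a - X ^ 2)) {r h q : L} (hr : r′ = algebraMap k L a - r ^ 2)
    (h0 : h ≠ 0) (hh : h′ = -2 * r * h) (hq : q′ = h) : TrdegGE k L 3 := by
  have hr_trans : Transcendental k r := ha.transcendental (by simpa using hr)
  let ρ : k⟮r⟯ := IntermediateField.AdjoinSimple.gen k r
  have hr_mem : r′ ∈ k⟮r⟯ :=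
    hr ▸ sub_mem (algebraMap_mem _ a) (pow_mem ρ.2 2)
  let _ : Differential k⟮r⟯ := restrictDifferential _ fun _ ↦ deriv_mem_adjoin_simple hr_mem
  have : DifferentialAlgebra k⟮r⟯ L := ⟨fun _ ↦ rfl⟩
  have hexp : NoExponentialPower (-2 * ρ) := fun n hn g hg ↦ by
    have hg' : (g : L)′ = n * (-2 * r) * g := congrArg Subtype.val hg
    refine Subtype.ext <| eq_zero_of_deriv_eq_mul_riccati ha hr (c := -2 * n) (by simpa using hn)
      g.2 ?_
    rw [hg', map_mul, map_neg, map_ofNat, map_intCast]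
    ring
  have hprim (g : k⟮r⟯) : g′ ≠ -(-2 * ρ) * g + 1 := fun hg ↦ by
    have hg' : (g : L)′ = -(-2 * r) * g + 1 := congrArg Subtype.val hg
    exact deriv_ne_two_mul_add_one_riccati ha hr g.2 (by rw [hg']; ring)
  have hh_mem : h′ ∈ k⟮r⟯⟮h⟯ :=
    hh ▸ mul_mem (algebraMap_mem _ (-2 * ρ)) (IntermediateField.mem_adjoin_simple_self _ h)
  let _ : Differential k⟮r⟯⟮h⟯ := restrictDifferential _ fun _ ↦ deriv_mem_adjoin_simple hh_mem
  have : DifferentialAlgebra k⟮r⟯⟮h⟯ L := ⟨fun _ ↦ rfl⟩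
  have hh_trans : Transcendental k⟮r⟯ h := transcendental_exponential hexp h0 hh
  have hq_trans : Transcendental k⟮r⟯⟮h⟯ q :=
    transcendental_primitive (b := IntermediateField.AdjoinSimple.gen _ h)
      (fun g hg ↦ deriv_ne_exponential hexp hprim h0 hh g.2 (congrArg Subtype.val hg)) hq
  have hzero : TrdegGE k k 0 :=
    ⟨Fin.elim0, algebraicIndependent_empty_type_iff.2 Function.injective_id⟩
  have : IsScalarTower k k⟮r⟯⟮h⟯ L := .of_algebraMap_eq fun _ ↦ rfl
  exact ((hzero.adjoin_simple hr_trans).adjoin_simple hh_trans).succ_of_transcendental hq_trans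

end TranscendenceDegree

section Splitting

lemma deriv_mulVec {ι R : Type*} [Fintype ι] [CommRing R] [Differential R] (M : Matrix ι ι R)
    (e : ι → R) :
    (fun i ↦ ((M *ᵥ e) i)′) = M.map (·′) *ᵥ e + M *ᵥ fun i ↦ (e i)′ := by
  ext i
  simp only [Matrix.mulVec, dotProduct, map_sum, Derivation.leibniz, smul_eq_mul, Pi.add_apply,
    Matrix.map_apply, Finset.sum_add_distrib, mul_comm, add_comm]

variable {L : Type*} [Field L] {T : L} {U V : Matrix (Fin 2) (Fin 2) L} {e : Fin 2 → L}

lemma mulVec_mulVec_eq_neg (hVU : V * U = -(U * V)) (e : Fin 2 → L) :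
    U *ᵥ V *ᵥ e = -(V *ᵥ U *ᵥ e) := by
  rw [Matrix.mulVec_mulVec, Matrix.mulVec_mulVec, hVU, Matrix.neg_mulVec, neg_neg]

lemma mulVec_ne_zero (hT : T ≠ 0) (hV : V * V = T • 1) (he : e ≠ 0) : V *ᵥ e ≠ 0 := fun h ↦ by
  have hTe : T • e = 0 := by
    rw [← Matrix.one_mulVec e, ← Matrix.smul_mulVec, ← hV, ← Matrix.mulVec_mulVec, h,
      Matrix.mulVec_zero]
  exact (smul_ne_zero hT he) hTe

variable [CharZero L] [Differential L]

lemma eq_zero_of_mulVec_eq_self (hT : T ≠ 0) (hV : V * V = T • 1) (hVU : V * U = -(U * V))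
    (hU' : U.map (·′) = -((2 : L) • (U * V))) (he : U *ᵥ e = e) (he1 : e 1 = 0) : e = 0 := by
  by_contra he0
  have he00 : e 0 ≠ 0 := fun h ↦ he0 (by ext i; fin_cases i <;> assumption)
  have hsmul : e = e 0 • ![1, 0] := by ext i; fin_cases i <;> simp [he1]
  have hfix : U *ᵥ ![1, 0] = ![1, 0] := smul_right_injective _ he00 <| by
    change e 0 • (U *ᵥ ![1, 0]) = e 0 • ![1, 0]
    rw [← Matrix.mulVec_smul, ← hsmul, he]
  have hconst : (fun i ↦ (![(1 : L), 0] i)′) = 0 := by ext i; fin_cases i <;> simp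
  have hderiv := deriv_mulVec U ![1, 0]
  rw [hfix, hconst, hU', Matrix.mulVec_zero, Matrix.neg_mulVec, Matrix.smul_mulVec,
    ← Matrix.mulVec_mulVec, mulVec_mulVec_eq_neg hVU, hfix, smul_neg, neg_neg, add_zero] at hderiv
  exact mulVec_ne_zero hT hV (by simp) ((smul_eq_zero_iff_right two_ne_zero).1 hderiv.symm)

lemma exists_mulVec_eq_self (hT : T ≠ 0) (hU : U * U = 1) (hV : V * V = T • 1)
    (hVU : V * U = -(U * V)) (hU' : U.map (·′) = -((2 : L) • (U * V))) :
    ∃ e : Fin 2 → L, U *ᵥ e = e ∧ e 1 = 1 := by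
  obtain ⟨e, he0, he⟩ : ∃ e ≠ 0, U *ᵥ e = e := by
    have hw : (![1, 0] : Fin 2 → L) ≠ 0 := by simp
    set w : Fin 2 → L := ![1, 0]
    by_cases hUw : w + U *ᵥ w = 0
    · refine ⟨V *ᵥ w, mulVec_ne_zero hT hV hw, ?_⟩
      rw [mulVec_mulVec_eq_neg hVU, eq_neg_of_add_eq_zero_right hUw, Matrix.mulVec_neg, neg_neg]
    · refine ⟨w + U *ᵥ w, hUw, ?_⟩
      rw [Matrix.mulVec_add, Matrix.mulVec_mulVec, hU, Matrix.one_mulVec, add_comm]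
  have he1 : e 1 ≠ 0 := fun h ↦ he0 (eq_zero_of_mulVec_eq_self hT hV hVU hU' he h)
  exact ⟨(e 1)⁻¹ • e, by rw [Matrix.mulVec_smul, he], by simp [he1]⟩

lemma deriv_eq_of_mulVec_eq_self (hT : T ≠ 0) (hV : V * V = T • 1) (hVU : V * U = -(U * V))
    (hU' : U.map (·′) = -((2 : L) • (U * V))) (he : U *ᵥ e = e) (he1 : e 1 = 1) :
    (fun i ↦ (e i)′) = V *ᵥ e - (V *ᵥ e) 1 • e := by
  have hUV : U *ᵥ V *ᵥ e = -(V *ᵥ e) := by rw [mulVec_mulVec_eq_neg hVU, he]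
  set e' : Fin 2 → L := fun i ↦ (e i)′ with he'
  have hUe' : U *ᵥ e' = e' - (2 : L) • V *ᵥ e := by
    have hderiv := deriv_mulVec U e
    rw [he, hU', Matrix.neg_mulVec, Matrix.smul_mulVec, ← Matrix.mulVec_mulVec, hUV, smul_neg,
      neg_neg] at hderiv
    exact eq_sub_of_add_eq' hderiv.symm
  rw [← sub_eq_zero]
  refine eq_zero_of_mulVec_eq_self hT hV hVU hU' ?_ ?_
  · rw [Matrix.mulVec_sub, Matrix.mulVec_sub, Matrix.mulVec_smul, he, hUe', hUV]
    module
  · simp only [he', Pi.sub_apply, Pi.smul_apply, he1, Derivation.map_one_eq_zero, smul_eq_mul,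
      mul_one, sub_self]

lemma deriv_mulVec_of_mulVec_eq_self (hT : T ≠ 0) (hV : V * V = T • 1) (hVU : V * U = -(U * V))
    (hU' : U.map (·′) = -((2 : L) • (U * V))) (hV' : (2 * T) • V.map (·′) = V + U * V)
    (he : U *ᵥ e = e) (he1 : e 1 = 1) :
    (fun i ↦ ((V *ᵥ e) i)′) = T • e - (V *ᵥ e) 1 • V *ᵥ e := by
  have hV'e : V.map (·′) *ᵥ e = 0 := by
    refine (smul_eq_zero_iff_right (mul_ne_zero two_ne_zero hT)).1 ?_
    rw [← Matrix.smul_mulVec, hV', Matrix.add_mulVec, ← Matrix.mulVec_mulVec,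
      mulVec_mulVec_eq_neg hVU, he, add_neg_cancel]
  rw [deriv_mulVec, hV'e, zero_add, deriv_eq_of_mulVec_eq_self hT hV hVU hU' he he1,
    Matrix.mulVec_sub, Matrix.mulVec_smul, Matrix.mulVec_mulVec, hV, Matrix.smul_mulVec,
    Matrix.one_mulVec]

theorem exists_riccati_of_matrix_pair (hT : T ≠ 0) (hU : U * U = 1) (hV : V * V = T • 1)
    (hVU : V * U = -(U * V)) (hU' : U.map (·′) = -((2 : L) • (U * V)))
    (hV' : (2 * T) • V.map (·′) = V + U * V) :
    ∃ r h q : L, r′ = T - r ^ 2 ∧ h ≠ 0 ∧ h′ = -2 * r * h ∧ q′ = h := by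
  obtain ⟨e, he, he1⟩ := exists_mulVec_eq_self hT hU hV hVU hU'
  have he' := deriv_eq_of_mulVec_eq_self hT hV hVU hU' he he1
  have hf' := deriv_mulVec_of_mulVec_eq_self hT hV hVU hU' hV' he he1
  have hUf : U *ᵥ V *ᵥ e = -(V *ᵥ e) := by rw [mulVec_mulVec_eq_neg hVU, he]
  have hf0 : V *ᵥ e ≠ 0 := mulVec_ne_zero hT hV (by rintro rfl; simp at he1)
  set f := V *ᵥ e
  have hq : (e 0)′ = f 0 - f 1 * e 0 := congrFun he' 0
  have hf0' : (f 0)′ = T * e 0 - f 1 * f 0 := congrFun hf' 0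
  have hr : (f 1)′ = T - f 1 ^ 2 := by
    simpa [he1, sq] using congrFun hf' 1
  refine ⟨f 1, f 0 - f 1 * e 0, e 0, hr, fun h0 ↦ hf0 ?_, ?_, hq⟩
  · have hfe : f = f 1 • e := by
      ext i
      fin_cases i
      · exact sub_eq_zero.1 h0
      · simp [he1]
    have hneg : f = -f := by
      rw [← hUf]
      nth_rw 2 [hfe]
      rw [Matrix.mulVec_smul, he, ← hfe]
    exact self_eq_neg.1 hneg
  · rw [map_sub, Derivation.leibniz, hr, hf0', hq, smul_eq_mul, smul_eq_mul]
    ring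

end Splitting

section QuaternionAlgebra

lemma IsRingDeriv.map_one {A : Type*} [Ring A] {δ : A → A} (h : IsRingDeriv δ) : δ 1 = 0 := by
  simpa using h.leibniz 1 1

lemma IsRingDeriv.map_ratCast {A : Type*} [DivisionRing A] [CharZero A] {δ : A → A}
    (h : IsRingDeriv δ) (c : ℚ) : δ c = 0 := by
  simpa [Rat.smul_def, h.map_one] using map_rat_smul (AddMonoidHom.mk' δ h.map_add) c 1

/-- The `Differential` structure on a commutative ring given by an unbundled derivation. -/
@[reducible] def IsRingDeriv.toDifferential {A : Type*} [CommRing A] {δ : A → A}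
    (h : IsRingDeriv δ) : Differential A where
  deriv := Derivation.mk' (AddMonoidHom.mk' δ h.map_add).toIntLinearMap fun a b ↦ by
    simpa [mul_comm, add_comm] using h.leibniz a b

variable {k Q : Type*} [Field k] [Ring Q] [Algebra k Q]

lemma DiffSplits.exists_algHom {d : Q → Q} {L : Type*} [Field L] [Algebra k L] {δL : L → L}
    (hδL : IsRingDeriv δL) (h : DiffSplits k Q d L δL) :
    ∃ ψ : Q →ₐ[k] Matrix (Fin 2) (Fin 2) L, ∀ x, (ψ x).map δL = ψ (d x) := by
  obtain ⟨D, -, hD, φ, hφ⟩ := h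
  refine ⟨(φ.toAlgHom.restrictScalars k).comp Algebra.TensorProduct.includeRight, fun x ↦ ?_⟩
  change (φ (1 ⊗ₜ x)).map δL = φ (1 ⊗ₜ d x)
  rw [← hφ, hD, hδL.map_one, TensorProduct.zero_tmul, zero_add]

lemma exists_riccati_of_diffSplits [CharZero k] {t : k} (ht : t ≠ 0) {u v : Q} (hu : u * u = 1)
    (hv : v * v = algebraMap k Q t) (huv : v * u = -(u * v)) {d : Q → Q}
    (hdu : d u = -((2 : k) • (u * v))) (hdv : d v = (2 * t)⁻¹ • (v + u * v))
    {L : Type*} [Field L] [Algebra k L] {δL : L → L} (hδL : IsRingDeriv δL)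
    (hsplit : DiffSplits k Q d L δL) :
    ∃ r h q : L, δL r = algebraMap k L t - r ^ 2 ∧ h ≠ 0 ∧ δL h = -2 * r * h ∧ δL q = h := by
  let _ : Differential L := hδL.toDifferential
  have : CharZero L := charZero_of_injective_algebraMap (algebraMap k L).injective
  obtain ⟨ψ, hψ⟩ := hsplit.exists_algHom hδL
  have hsmul (c : k) (M : Matrix (Fin 2) (Fin 2) L) : algebraMap k L c • M = c • M :=
    algebraMap_smul L c M
  refine exists_riccati_of_matrix_pair (U := ψ u) (V := ψ v) (by simpa using ht)
    (by rw [← map_mul, hu, map_one]) ?_ (by rw [← map_mul, huv, map_neg, map_mul])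
    ((hψ u).trans ?_) ((congrArg _ (hψ v)).trans ?_)
  · rw [← map_mul, hv, AlgHom.commutes, hsmul, Algebra.algebraMap_eq_smul_one]
  · rw [hdu, map_neg, map_smul, map_mul, ← hsmul, map_ofNat]
  · rw [hdv, map_smul, map_add, map_mul, ← map_ofNat (algebraMap k L) 2, ← map_mul, hsmul,
      smul_inv_smul₀ (mul_ne_zero two_ne_zero ht)]

variable {u v : Q} (s : k)

lemma commutator_fst_eq (huv : v * u = -(u * v)) :
    u * (-(algebraMap k Q s * u) - v) - (-(algebraMap k Q s * u) - v) * u =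
      -((2 : k) • (u * v)) := by
  rw [mul_sub, sub_mul, mul_neg, neg_mul, mul_assoc, ← Algebra.smul_def, ← Algebra.smul_def,
    mul_smul_comm, huv, two_smul]
  abel

lemma commutator_snd_eq (huv : v * u = -(u * v)) :
    v * (-(algebraMap k Q s * u) - v) - (-(algebraMap k Q s * u) - v) * v =
      (2 * s) • (u * v) := by
  rw [mul_sub, sub_mul, mul_neg, neg_mul, mul_assoc, ← Algebra.smul_def, ← Algebra.smul_def,
    mul_smul_comm, huv, mul_smul, two_smul, smul_neg]
  abel

end QuaternionAlgebra

section RationalFunctions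

variable {F : Type*} [Field F]

lemma differentialAlgebra_ratFunc [Differential (RatFunc F)]
    (hC : ∀ c : F, (RatFunc.C c)′ = 0) (hX : (RatFunc.X : RatFunc F)′ = 1) :
    DifferentialAlgebra F[X] (RatFunc F) where
  deriv_algebraMap p := by
    rw [deriv_polynomial]
    induction p using Polynomial.induction_on' with
    | add p q hp hq => simp only [map_add, hp, hq]
    | monomial n c =>
      rw [← C_mul_X_pow_eq_monomial, derivative_C_mul_X_pow]
      simp only [map_mul, map_pow, map_natCast, RatFunc.algebraMap_C, RatFunc.algebraMap_X,
        Derivation.leibniz, Derivation.leibniz_pow, hC, hX, smul_eq_mul, nsmul_eq_mul]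
      ring

lemma onlyConstantDarboux_riccati_ratFunc [CharZero F] [Differential (RatFunc F)]
    (hC : ∀ c : F, (RatFunc.C c)′ = 0) (hX : (RatFunc.X : RatFunc F)′ = 1) :
    OnlyConstantDarboux (C RatFunc.X - X ^ 2 : (RatFunc F)[X]) := by
  have := differentialAlgebra_ratFunc hC hX
  obtain ⟨_⟩ : Nonempty (NormalizedGCDMonoid F[X]) := inferInstance
  simpa using onlyConstantDarboux_map (k := RatFunc F) (onlyConstantDarboux_riccati F)

end RationalFunctions

theorem stmt_12_general {F : Type*} [Field F] [CharZero F]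
    (δk : RatFunc F → RatFunc F) (hδk : IsRingDeriv δk) (hC : ∀ c : F, δk (RatFunc.C c) = 0)
    (hX : δk RatFunc.X = 1) (Q : Type*) [Ring Q] [Algebra (RatFunc F) Q]
    (u v : Q) (hu : u * u = 1) (hv : v * v = algebraMap (RatFunc F) Q RatFunc.X)
    (huv : v * u = -(u * v)) (d : Q → Q) (ϑ : Q)
    (hϑ : ϑ = -(algebraMap (RatFunc F) Q (1 / (4 * RatFunc.X)) * u) - v)
    (hdu : d u = u * ϑ - ϑ * u)
    (hdv : d v = algebraMap (RatFunc F) Q (δk RatFunc.X / (2 * RatFunc.X)) * v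
      + (v * ϑ - ϑ * v))
    (L : Type*) [Field L] [Algebra (RatFunc F) L]
    (δL : L → L) (hδL : IsRingDeriv δL) (hresL : RestrictsTo δk δL)
    (hsplit : DiffSplits (RatFunc F) Q d L δL) :
    TrdegGE (RatFunc F) L 3 := by
  have hX0 : (RatFunc.X : RatFunc F) ≠ 0 := RatFunc.X_ne_zero
  rw [hϑ, commutator_fst_eq _ huv] at hdu
  rw [hϑ, commutator_snd_eq _ huv, hX, one_div, ← Algebra.smul_def,
    show (2 * (1 / (4 * RatFunc.X)) : RatFunc F) = (2 * RatFunc.X)⁻¹ by field_simp; norm_num,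
    ← smul_add] at hdv
  obtain ⟨r, h, q, hr, h0, hh, hq⟩ :=
    exists_riccati_of_diffSplits hX0 hu hv huv hdu hdv hδL hsplit
  let _ : Differential (RatFunc F) := hδk.toDifferential
  let _ : Differential L := hδL.toDifferential
  have : DifferentialAlgebra (RatFunc F) L := ⟨hresL⟩
  exact trdegGE_three_of_riccati (onlyConstantDarboux_riccati_ratFunc hC hX) hr h0 hh hq

/-- Let `k = ℚ(t)` with `t′ = 1`, `Q = (1, t)_k`, and
`d = d_{(u,v)} + ∂_ϑ` with `ϑ = −(1/(4t))u − v`. Then every differential splitting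
field of `(Q, d)` has transcendence degree at least `3` over `k`. -/
theorem stmt_12
    (δk : RatFunc ℚ → RatFunc ℚ) (hδk : IsRingDeriv δk) (hX : δk RatFunc.X = 1)
    (Q : Type*) [Ring Q] [Algebra (RatFunc ℚ) Q]
    (u v : Q) (hu : u * u = 1)
    (hv : v * v = algebraMap (RatFunc ℚ) Q RatFunc.X)
    (huv : v * u = -(u * v))
    (bQ : Module.Basis (Fin 4) (RatFunc ℚ) Q) (hbQ : ⇑bQ = ![1, u, v, u * v])
    (d : Q → Q) (hd : IsRingDeriv d) (hdk : RestrictsTo δk d)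
    (ϑ : Q)
    (hϑ : ϑ = -(algebraMap (RatFunc ℚ) Q (1 / (4 * RatFunc.X)) * u) - v)
    (hdu : d u = u * ϑ - ϑ * u)
    (hdv : d v = algebraMap (RatFunc ℚ) Q (δk RatFunc.X / (2 * RatFunc.X)) * v
      + (v * ϑ - ϑ * v))
    (L : Type*) [Field L] [Algebra (RatFunc ℚ) L]
    (δL : L → L) (hδL : IsRingDeriv δL) (hresL : RestrictsTo δk δL)
    (hsplit : DiffSplits (RatFunc ℚ) Q d L δL) :
    TrdegGE (RatFunc ℚ) L 3 := by
  have hC (c : ℚ) : δk (RatFunc.C c) = 0 := by rw [eq_ratCast, hδk.map_ratCast]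
  exact stmt_12_general δk hδk hC hX Q u v hu hv huv d ϑ hϑ hdu hdv L δL hδL hresL hsplit
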